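/- arXiv:1710.10694 — 2 statements merged into one kernel-verified Lean document; each statement's English description precedes it below -/
import Mathlib

section
/- Let (Ω, μ) be a probability space and T : Ω → Ω an ergodic measure-preserving transformation. Let (X, d) be a proper metric space with basepoint x₀ ∈ X, and let ω ↦ g_ω be an assignment of a surjective isometry g_ω of X to each ω ∈ Ω such that (ω, x) ↦ g_ω x is measurable and ∫_Ω d(g_ω x₀, x₀) dμ(ω) < ∞. Set l := inf_N (1/N) ∫_Ω d(g_ω g_{Tω} ⋯ g_{T^{N−1}ω} x₀, x₀) dμ(ω). Then: (a) for μ-a.e. ω, lim_{N→∞} (1/N) d(g_ω g_{Tω} ⋯ g_{T^{N−1}ω} x₀, x₀) = l; (b) there exists a measurable map ω ↦ h_ω from Ω to the closure X̄ of Φ(X) (with its topology of pointwise convergence) such that for μ-a.e. ω, lim_{N→∞} −(1/N) h_ω(g_ω g_{Tω} ⋯ g_{T^{N−1}ω} x₀) = l; and (c) if l > 0 then h_ω ∈ X̄ \ Φ(X) for μ-a.e. ω. -/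
open MeasureTheory Filter Topology

/-- The orbit points `g_ω g_{Tω} ⋯ g_{T^{N−1}ω} x₀`. -/
noncomputable def orbitPt {Ω X : Type*} (T : Ω → Ω) (g : Ω → X → X) (x₀ : X) :
    ℕ → Ω → X
  | 0, _ => x₀
  | n + 1, ω => g ω (orbitPt T g x₀ n (T ω))

section Birkhoff

variable {Ω : Type*} {T : Ω → Ω}

/-- The running maximum `max (0, S₁ f, …, Sₙ f)` of the Birkhoff sums of `f`. -/
noncomputable def birkhoffMax (T : Ω → Ω) (f : Ω → ℝ) : ℕ → Ω → ℝ
  | 0, _ => 0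
  | n + 1, ω => max 0 (f ω + birkhoffMax T f n (T ω))

theorem birkhoffMax_nonneg (f : Ω → ℝ) (n : ℕ) (ω : Ω) : 0 ≤ birkhoffMax T f n ω := by
  cases n <;> simp [birkhoffMax]

theorem birkhoffMax_le_succ (f : Ω → ℝ) (n : ℕ) (ω : Ω) :
    birkhoffMax T f n ω ≤ birkhoffMax T f (n + 1) ω := by
  induction n generalizing ω with
  | zero => exact birkhoffMax_nonneg f 1 ω
  | succ n ih =>
    rw [birkhoffMax, birkhoffMax]
    gcongr
    exact ih (T ω)

theorem birkhoffSum_le_birkhoffMax (f : Ω → ℝ) (n : ℕ) (ω : Ω) :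
    birkhoffSum T f n ω ≤ birkhoffMax T f n ω := by
  induction n generalizing ω with
  | zero => simp [birkhoffMax]
  | succ n ih =>
    rw [birkhoffSum_succ', birkhoffMax]
    exact le_max_of_le_right (by gcongr; exact ih (T ω))

variable [MeasurableSpace Ω] {μ : Measure Ω}

theorem MeasureTheory.MeasurePreserving.integral_comp_of_aestronglyMeasurable
    (hT : MeasurePreserving T μ μ) {f : Ω → ℝ} (hf : AEStronglyMeasurable f μ) :
    ∫ ω, f (T ω) ∂μ = ∫ ω, f ω ∂μ := by
  rw [← integral_map hT.aemeasurable (by rwa [hT.map_eq]), hT.map_eq]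

theorem measurable_birkhoffMax (hT : Measurable T) {f : Ω → ℝ} (hf : Measurable f) (n : ℕ) :
    Measurable (birkhoffMax T f n) := by
  induction n with
  | zero => exact measurable_const
  | succ n ih => exact measurable_const.max (hf.add (ih.comp hT))

theorem integrable_birkhoffMax [IsFiniteMeasure μ] (hT : MeasurePreserving T μ μ) {f : Ω → ℝ}
    (hf : Integrable f μ) (n : ℕ) : Integrable (birkhoffMax T f n) μ := by
  induction n with
  | zero => exact integrable_zero _ _ _
  | succ n ih =>
    exact (integrable_const (0 : ℝ)).sup (hf.add (hT.integrable_comp_of_integrable ih))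

theorem measurable_birkhoffSum (hT : Measurable T) {f : Ω → ℝ} (hf : Measurable f)
    (n : ℕ) : Measurable (birkhoffSum T f n) := by
  unfold birkhoffSum
  exact Finset.measurable_fun_sum _ fun k _ => hf.comp (hT.iterate k)

theorem Ergodic.ae_bddAbove_birkhoffSum [IsProbabilityMeasure μ] (hT : Ergodic T μ) {f : Ω → ℝ}
    (hfm : Measurable f) (hf : Integrable f μ) (hneg : ∫ ω, f ω ∂μ < 0) :
    ∀ᵐ ω ∂μ, BddAbove (Set.range fun n => birkhoffSum T f n ω) := by
  have hTm := hT.measurable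
  set E : Set Ω := {ω | BddAbove (Set.range fun n => birkhoffSum T f n ω)} with hE
  have hEm : MeasurableSet E :=
    measurableSet_bddAbove_range fun n => measurable_birkhoffSum hTm hfm n
  have hinv : T ⁻¹' E = E := by
    ext ω
    simp only [hE, Set.mem_preimage, Set.mem_ofPred_eq]
    constructor
    · rintro ⟨C, hC⟩
      refine ⟨max 0 (f ω + C), ?_⟩
      rintro _ ⟨n, rfl⟩
      cases n with
      | zero => simp
      | succ n =>
        have := hC ⟨n, rfl⟩
        simp only [birkhoffSum_succ'] at this ⊢
        exact le_max_of_le_right (by linarith)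
    · rintro ⟨C, hC⟩
      refine ⟨C - f ω, ?_⟩
      rintro _ ⟨n, rfl⟩
      have := hC ⟨n + 1, rfl⟩
      simp only [birkhoffSum_succ'] at this
      linarith
  rcases hT.toPreErgodic.ae_mem_or_ae_notMem hEm hinv with h | h
  · exact h
  exfalso
  have hlim : Tendsto (fun n => ∫ ω, max (-birkhoffMax T f n (T ω)) (f ω) ∂μ) atTop
      (𝓝 (∫ ω, f ω ∂μ)) := by
    refine tendsto_integral_of_dominated_convergence (fun ω => |f ω|)
      (fun n => ?_) hf.abs (fun n => ?_) ?_
    · exact (((measurable_birkhoffMax hTm hfm n).comp hTm).neg.max hfm).aestronglyMeasurable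
    · refine Eventually.of_forall fun ω => ?_
      have := birkhoffMax_nonneg (T := T) f n (T ω)
      rw [Real.norm_eq_abs, abs_le]
      exact ⟨(neg_abs_le _).trans (le_max_right _ _),
        max_le (by linarith [abs_nonneg (f ω)]) (le_abs_self _)⟩
    · filter_upwards [h] with ω hω
      have hω' : T ω ∉ E := fun hh => hω (hinv ▸ hh)
      have : ∃ N, -f ω < birkhoffSum T f N (T ω) := by
        by_contra! hcon
        exact hω' ⟨_, by rintro _ ⟨n, rfl⟩; exact hcon n⟩
      obtain ⟨N, hN⟩ := this
      refine tendsto_const_nhds.congr' ?_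
      filter_upwards [eventually_ge_atTop N] with n hn
      have h1 := birkhoffSum_le_birkhoffMax (T := T) f N (T ω)
      have h2 := monotone_nat_of_le_succ
        (f := fun n => birkhoffMax T f n (T ω)) (fun n => birkhoffMax_le_succ f n (T ω)) hn
      simp only at h2
      rw [max_eq_right]
      linarith
  refine absurd (ge_of_tendsto' hlim fun n => ?_) (not_le.mpr hneg)
  have hi := integrable_birkhoffMax hT.toMeasurePreserving hf n
  have hi1 := integrable_birkhoffMax hT.toMeasurePreserving hf (n + 1)
  have hiT : Integrable (fun ω => birkhoffMax T f n (T ω)) μ :=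
    hT.toMeasurePreserving.integrable_comp_of_integrable hi
  have e1 : ∫ ω, birkhoffMax T f n (T ω) ∂μ = ∫ ω, birkhoffMax T f n ω ∂μ :=
    hT.toMeasurePreserving.integral_comp_of_aestronglyMeasurable hi.aestronglyMeasurable
  have e2 : ∀ ω, max (-birkhoffMax T f n (T ω)) (f ω)
      = birkhoffMax T f (n + 1) ω - birkhoffMax T f n (T ω) := fun ω => by
    rw [birkhoffMax, ← max_sub_sub_right, zero_sub, add_sub_cancel_right]
  simp_rw [e2]
  rw [integral_sub hi1 hiT, e1, sub_nonneg]
  exact integral_mono hi hi1 fun ω => birkhoffMax_le_succ f n ω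

theorem Ergodic.ae_eventually_birkhoffSum_le [IsProbabilityMeasure μ] (hT : Ergodic T μ)
    {f : Ω → ℝ} (hfm : Measurable f) (hf : Integrable f μ) :
    ∀ᵐ ω ∂μ, ∀ ε > 0, ∀ᶠ n : ℕ in atTop,
      birkhoffSum T f n ω / n ≤ ∫ ω, f ω ∂μ + ε := by
  set c := ∫ ω, f ω ∂μ
  have key : ∀ k : ℕ, ∀ᵐ ω ∂μ,
      BddAbove (Set.range fun n => birkhoffSum T (fun ω => f ω - (c + 1 / (k + 1))) n ω) := by
    intro k
    refine hT.ae_bddAbove_birkhoffSum (hfm.sub_const _) (hf.sub (integrable_const _)) ?_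
    rw [integral_sub hf (integrable_const _)]
    have : (0 : ℝ) < 1 / (k + 1) := by positivity
    simp only [integral_const, probReal_univ, one_smul]
    linarith
  filter_upwards [ae_all_iff.mpr key] with ω hω ε hε
  obtain ⟨k, hk⟩ := exists_nat_one_div_lt (half_pos hε)
  obtain ⟨C, hC⟩ := hω k
  filter_upwards [eventually_gt_atTop 0,
    (tendsto_const_div_atTop_nhds_zero_nat C).eventually_lt_const (half_pos hε)] with n hn hCn
  have hn' : (0 : ℝ) < n := by exact_mod_cast hn
  have h1 := hC ⟨n, rfl⟩
  simp only [birkhoffSum, Finset.sum_sub_distrib, Finset.sum_const, Finset.card_range,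
    nsmul_eq_mul] at h1
  rw [div_lt_iff₀ hn'] at hCn
  rw [birkhoffSum, div_le_iff₀ hn']
  nlinarith

/-- **Birkhoff's pointwise ergodic theorem** for an ergodic transformation. -/
theorem Ergodic.ae_tendsto_birkhoffSum_div [IsProbabilityMeasure μ] (hT : Ergodic T μ)
    {f : Ω → ℝ} (hfm : Measurable f) (hf : Integrable f μ) :
    ∀ᵐ ω ∂μ, Tendsto (fun n : ℕ => birkhoffSum T f n ω / n) atTop (𝓝 (∫ ω, f ω ∂μ)) := by
  filter_upwards [hT.ae_eventually_birkhoffSum_le hfm hf,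
    hT.ae_eventually_birkhoffSum_le hfm.neg hf.neg] with ω h1 h2
  rw [Metric.tendsto_nhds]
  intro ε hε
  filter_upwards [h1 (ε / 2) (half_pos hε), h2 (ε / 2) (half_pos hε)] with n hn1 hn2
  simp only [Pi.neg_apply, integral_neg, birkhoffSum, Finset.sum_neg_distrib, neg_div]
    at hn1 hn2 ⊢
  rw [Real.dist_eq, abs_lt]
  constructor <;> linarith

theorem Ergodic.ae_tendsto_comp_iterate_div [IsProbabilityMeasure μ] (hT : Ergodic T μ)
    {f : Ω → ℝ} (hfm : Measurable f) (hf : Integrable f μ) :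
    ∀ᵐ ω ∂μ, Tendsto (fun n : ℕ => f (T^[n] ω) / n) atTop (𝓝 0) := by
  filter_upwards [hT.ae_tendsto_birkhoffSum_div hfm hf] with ω h
  have h1 : Tendsto (fun n : ℕ => birkhoffSum T f (n + 1) ω / ((n + 1 : ℕ) : ℝ) *
      ((n : ℝ) / (n + 1))⁻¹) atTop (𝓝 ((∫ ω, f ω ∂μ) * 1⁻¹)) :=
    (h.comp (tendsto_add_atTop_nat 1)).mul
      ((tendsto_natCast_div_add_atTop (1 : ℝ)).inv₀ one_ne_zero)
  have h2 := h1.sub h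
  rw [inv_one, mul_one, sub_self] at h2
  refine h2.congr' ?_
  filter_upwards [eventually_gt_atTop 0] with n hn
  have hn' : (0 : ℝ) < n := by exact_mod_cast hn
  rw [birkhoffSum_succ]
  push_cast
  field_simp
  ring

end Birkhoff

/-- A nonnegative integrable cocycle over `T` that is subadditive and satisfies the
reverse triangle inequality, such as the displacement of a cocycle of isometries. -/
structure IsDisplacementCocycle {Ω : Type*} [MeasurableSpace Ω] (μ : Measure Ω) (T : Ω → Ω)
    (a : ℕ → Ω → ℝ) : Prop where
  measurable (n : ℕ) : Measurable (a n)
  integrable (n : ℕ) : Integrable (a n) μ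
  zero (ω : Ω) : a 0 ω = 0
  nonneg (n : ℕ) (ω : Ω) : 0 ≤ a n ω
  add_le (n m : ℕ) (ω : Ω) : a (n + m) ω ≤ a n ω + a m (T^[n] ω)
  le_add (n m : ℕ) (ω : Ω) : a n ω ≤ a (n + m) ω + a m (T^[n] ω)

namespace IsDisplacementCocycle

variable {Ω : Type*} [MeasurableSpace Ω] {μ : Measure Ω} {T : Ω → Ω} {a : ℕ → Ω → ℝ}

theorem sum_shift_le (ha : IsDisplacementCocycle μ T a) (s n : ℕ) (ω : Ω) :
    ∑ r ∈ Finset.range s, a (n + r) ω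
      ≤ ∑ r ∈ Finset.range s, a r ω + birkhoffSum T (a s) n ω := by
  induction n with
  | zero => simp
  | succ n ih =>
    have h1 := Finset.sum_range_succ (fun r => a (n + r) ω) s
    have h2 := Finset.sum_range_succ' (fun r => a (n + r) ω) s
    have h3 : ∑ r ∈ Finset.range s, a (n + 1 + r) ω = ∑ r ∈ Finset.range s, a (n + (r + 1)) ω :=
      Finset.sum_congr rfl fun r _ => by rw [add_assoc, add_comm 1 r]
    have h4 := ha.add_le n s ω
    rw [birkhoffSum_succ, h3]
    simp only [add_zero] at h2
    linarith

theorem ae_eventually_div_le [IsProbabilityMeasure μ] (ha : IsDisplacementCocycle μ T a)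
    (hT : Ergodic T μ) {s : ℕ} (hs : 0 < s) :
    ∀ᵐ ω ∂μ, ∀ ε > 0, ∀ᶠ n : ℕ in atTop, a n ω / n ≤ (∫ ω, a s ω ∂μ) / s + ε := by
  have hfm : Measurable fun ω => ∑ r ∈ Finset.range s, a r ω :=
    Finset.measurable_fun_sum _ fun r _ => ha.measurable r
  have hf : Integrable (fun ω => ∑ r ∈ Finset.range s, a r ω) μ :=
    integrable_finsetSum _ fun r _ => ha.integrable r
  filter_upwards [hT.ae_tendsto_birkhoffSum_div (ha.measurable s) (ha.integrable s),
    hT.ae_tendsto_comp_iterate_div hfm hf] with ω h1 h2 ε hε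
  have hs' : (0 : ℝ) < s := by exact_mod_cast hs
  have h3 := (((tendsto_const_div_atTop_nhds_zero_nat (∑ r ∈ Finset.range s, a r ω)).add h1).add
    h2).div_const (s : ℝ)
  rw [zero_add, add_zero] at h3
  filter_upwards [eventually_gt_atTop 0,
    h3.eventually_le_const (lt_add_of_pos_right _ hε)] with n hn h
  have hn' : (0 : ℝ) < n := by exact_mod_cast hn
  refine le_trans ?_ h
  have h5 : ∑ r ∈ Finset.range s, a n ω
      ≤ ∑ r ∈ Finset.range s, (a (n + r) ω + a r (T^[n] ω)) :=
    Finset.sum_le_sum fun r _ => ha.le_add n r ω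
  rw [Finset.sum_add_distrib, Finset.sum_const, Finset.card_range, nsmul_eq_mul] at h5
  have h6 := ha.sum_shift_le s n ω
  rw [← add_div, ← add_div, div_div, div_le_div_iff₀ hn' (by positivity)]
  nlinarith

theorem le_birkhoffSum (ha : IsDisplacementCocycle μ T a) (n : ℕ) (ω : Ω) :
    a n ω ≤ birkhoffSum T (a 1) n ω := by
  simpa [ha.zero] using ha.sum_shift_le 1 n ω

theorem tendsto_integral_excess [IsProbabilityMeasure μ] (ha : IsDisplacementCocycle μ T a)
    (hT : Ergodic T μ) {A : ℝ} (hA : 0 ≤ A)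
    (hup : ∀ᵐ ω ∂μ, ∀ ε > 0, ∀ᶠ n : ℕ in atTop, a n ω / n ≤ A + ε) :
    Tendsto (fun s : ℕ => ∫ ω, max (a s ω / s - A) 0 ∂μ) atTop (𝓝 0) := by
  set c := ∫ ω, a 1 ω ∂μ with hc
  have hc0 : 0 ≤ c := integral_nonneg (ha.nonneg 1)
  have hYm (s : ℕ) : Measurable fun ω => birkhoffSum T (a 1) s ω / s :=
    (measurable_birkhoffSum hT.measurable (ha.measurable 1) s).div_const _
  have hYi (s : ℕ) : Integrable (birkhoffSum T (a 1) s) μ :=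
    integrable_finsetSum _ fun k _ =>
      (hT.toMeasurePreserving.iterate k).integrable_comp_of_integrable (ha.integrable 1)
  have hYint (s : ℕ) : ∫ ω, birkhoffSum T (a 1) s ω ∂μ = s * c := by
    simp only [birkhoffSum]
    have hi (k : ℕ) : Integrable (fun ω => a 1 (T^[k] ω)) μ :=
      (hT.toMeasurePreserving.iterate k).integrable_comp_of_integrable (ha.integrable 1)
    rw [integral_finsetSum _ fun k _ => hi k]
    have (k : ℕ) : ∫ ω, a 1 (T^[k] ω) ∂μ = c :=
      (hT.toMeasurePreserving.iterate k).integral_comp_of_aestronglyMeasurable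
        (ha.integrable 1).aestronglyMeasurable
    simp [this]
  have hZm (s : ℕ) : Measurable fun ω => max (a s ω / s - A) 0 :=
    (((ha.measurable s).div_const _).sub_const _).max measurable_const
  have hZi (s : ℕ) : Integrable (fun ω => max (a s ω / s - A) 0) μ :=
    (((ha.integrable s).div_const _).sub (integrable_const _)).sup (integrable_const _)
  have hY0 (s : ℕ) (ω : Ω) : 0 ≤ birkhoffSum T (a 1) s ω / s :=
    div_nonneg (Finset.sum_nonneg fun k _ => ha.nonneg 1 _) s.cast_nonneg
  have hlim : Tendsto (fun s : ℕ => ∫ ω, (min (max (a s ω / s - A) 0) c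
      - min (birkhoffSum T (a 1) s ω / s) c) ∂μ) atTop (𝓝 (∫ _, (0 - c) ∂μ)) := by
    refine tendsto_integral_of_dominated_convergence (fun _ => c)
      (fun s => ?_) (integrable_const c) (fun s => ?_) ?_
    · exact (((hZm s).min measurable_const).sub
        ((hYm s).min measurable_const)).aestronglyMeasurable
    · refine Eventually.of_forall fun ω => ?_
      have h1 : 0 ≤ min (max (a s ω / s - A) 0) c := le_min (le_max_right _ _) hc0
      have h2 : 0 ≤ min (birkhoffSum T (a 1) s ω / s) c := le_min (hY0 s ω) hc0
      have h3 := min_le_right (max (a s ω / s - A) 0) c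
      have h4 := min_le_right (birkhoffSum T (a 1) s ω / s) c
      rw [Real.norm_eq_abs, abs_le]
      constructor <;> linarith
    · filter_upwards [hup, hT.ae_tendsto_birkhoffSum_div (ha.measurable 1) (ha.integrable 1)]
        with ω h1 h2
      have hZ : Tendsto (fun s : ℕ => max (a s ω / s - A) 0) atTop (𝓝 0) := by
        rw [Metric.tendsto_nhds]
        intro ε hε
        filter_upwards [h1 (ε / 2) (half_pos hε)] with n hn
        rw [Real.dist_eq, sub_zero, abs_of_nonneg (le_max_right _ _)]
        exact max_lt (by linarith) hε
      have h3 := (hZ.min (tendsto_const_nhds (x := c))).sub (h2.min (tendsto_const_nhds (x := c)))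
      rwa [min_eq_left hc0, ← hc, min_self] at h3
  have hlim' := hlim.add_const c
  simp only [integral_const, probReal_univ, one_smul, zero_sub, neg_add_cancel] at hlim'
  refine tendsto_of_tendsto_of_tendsto_of_le_of_le' tendsto_const_nhds hlim'
    (Eventually.of_forall fun s => integral_nonneg fun ω => le_max_right _ _) ?_
  filter_upwards [eventually_gt_atTop 0] with s hs
  have hs' : (0 : ℝ) < s := by exact_mod_cast hs
  have hYc : ∫ ω, birkhoffSum T (a 1) s ω / s ∂μ = c := by
    rw [integral_div, hYint]
    field_simp
  have hmi : Integrable (fun ω => min (max (a s ω / s - A) 0) c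
      - min (birkhoffSum T (a 1) s ω / s) c) μ :=
    ((hZi s).inf (integrable_const c)).sub (((hYi s).div_const _).inf (integrable_const c))
  rw [← hYc, ← integral_add (by rwa [hYc]) ((hYi s).div_const _), hYc]
  refine integral_mono (hZi s) (hmi.add ((hYi s).div_const _)) fun ω => ?_
  have hZY : max (a s ω / s - A) 0 ≤ birkhoffSum T (a 1) s ω / s := by
    refine max_le ?_ (hY0 s ω)
    have : a s ω / s ≤ birkhoffSum T (a 1) s ω / s := by
      gcongr
      exact ha.le_birkhoffSum s ω
    linarith
  rcases le_total (max (a s ω / s - A) 0) c with h | h <;>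
    rcases le_total (birkhoffSum T (a 1) s ω / s) c with h' | h' <;>
    simp only [min_eq_left, min_eq_right, h, h'] <;> linarith

end IsDisplacementCocycle

section Envelope

variable {Ω : Type*}

/-- The largest of the values `b * k + a (n - s * k) (T^[s * k] ω)` with `s * k ≤ n`. -/
noncomputable def envelope (T : Ω → Ω) (a : ℕ → Ω → ℝ) (s : ℕ) (b : ℝ) (n : ℕ) (ω : Ω) : ℝ :=
  if _h : 0 < s ∧ s ≤ n then max (a n ω) (b + envelope T a s b (n - s) (T^[s] ω)) else a n ω
termination_by n

variable {T : Ω → Ω} {a : ℕ → Ω → ℝ} {s : ℕ} {b : ℝ}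

theorem envelope_of_lt {n : ℕ} (hn : n < s) (ω : Ω) : envelope T a s b n ω = a n ω := by
  rw [envelope, dif_neg (by omega)]

theorem envelope_add (hs : 0 < s) (n : ℕ) (ω : Ω) :
    envelope T a s b (n + s) ω = max (a (n + s) ω) (b + envelope T a s b n (T^[s] ω)) := by
  rw [envelope, dif_pos (by omega), Nat.add_sub_cancel]

theorem le_envelope (n : ℕ) (ω : Ω) : a n ω ≤ envelope T a s b n ω := by
  rw [envelope]
  split_ifs
  · exact le_max_left _ _
  · exact le_rfl

theorem add_le_envelope (hs : 0 < s) (n k : ℕ) (ω : Ω) :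
    b * k + a n (T^[s * k] ω) ≤ envelope T a s b (n + s * k) ω := by
  induction k generalizing ω with
  | zero => simpa using le_envelope n ω
  | succ k ih =>
    rw [mul_add, mul_one, ← add_assoc, envelope_add hs, Function.iterate_add_apply]
    refine le_max_of_le_right ?_
    have := ih (T^[s] ω)
    push_cast
    linarith

variable [MeasurableSpace Ω] {μ : Measure Ω}

theorem measurable_envelope (hT : Measurable T) (ha : ∀ n, Measurable (a n)) (hs : 0 < s)
    (n : ℕ) : Measurable (envelope T a s b n) := by
  induction n using Nat.strong_induction_on with
  | _ n ih =>
    rcases lt_or_ge n s with h | h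
    · rw [show envelope T a s b n = a n from funext fun ω => envelope_of_lt h ω]
      exact ha n
    · obtain ⟨m, rfl⟩ := Nat.exists_eq_add_of_le' h
      rw [show envelope T a s b (m + s) = _ from funext fun ω => envelope_add hs m ω]
      exact (ha _).max (((ih m (by omega)).comp (hT.iterate s)).const_add b)

theorem integrable_envelope [IsFiniteMeasure μ] (hT : MeasurePreserving T μ μ)
    (ha : ∀ n, Integrable (a n) μ) (hs : 0 < s) (n : ℕ) : Integrable (envelope T a s b n) μ := by
  induction n using Nat.strong_induction_on with
  | _ n ih =>
    rcases lt_or_ge n s with h | h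
    · exact (ha n).congr (Eventually.of_forall fun ω => (envelope_of_lt h ω).symm)
    · obtain ⟨m, rfl⟩ := Nat.exists_eq_add_of_le' h
      rw [show envelope T a s b (m + s) = _ from funext fun ω => envelope_add hs m ω]
      exact (ha _).sup ((integrable_const b).add
        ((hT.iterate s).integrable_comp_of_integrable (ih m (by omega))))

end Envelope

namespace IsDisplacementCocycle

variable {Ω : Type*} [MeasurableSpace Ω] {μ : Measure Ω} {T : Ω → Ω} {a : ℕ → Ω → ℝ}

theorem integral_envelope_add_le [IsProbabilityMeasure μ] (ha : IsDisplacementCocycle μ T a)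
    (hT : MeasurePreserving T μ μ) {s : ℕ} (hs : 0 < s) (A ε : ℝ) (n : ℕ) :
    ∫ ω, envelope T a s ((A - ε) * s) (n + s) ω ∂μ
        + ε * s * μ.real {ω | a (n + s) ω < envelope T a s ((A - ε) * s) (n + s) ω}
      ≤ ∫ ω, envelope T a s ((A - ε) * s) n ω ∂μ
        + (A * s + s * ∫ ω, max (a s ω / s - A) 0 ∂μ) := by
  set b := (A - ε) * s with hb
  set B := {ω | a (n + s) ω < envelope T a s b (n + s) ω}
  have hs' : (0 : ℝ) < s := by exact_mod_cast hs
  have hBm : MeasurableSet B := measurableSet_lt (ha.measurable _)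
    (measurable_envelope hT.measurable ha.measurable hs _)
  have hZi : Integrable (fun ω => max (a s ω / s - A) 0) μ :=
    (((ha.integrable s).div_const _).sub (integrable_const _)).sup (integrable_const _)
  have hEi := integrable_envelope (b := b) hT ha.integrable hs
  have hETi : Integrable (fun ω => envelope T a s b n (T^[s] ω)) μ :=
    (hT.iterate s).integrable_comp_of_integrable (hEi n)
  have hBi : Integrable (B.indicator fun _ => ε * s) μ :=
    (integrable_const (ε * (s : ℝ))).indicator hBm
  have hci : Integrable (fun ω => A * s + s * max (a s ω / s - A) 0) μ :=
    (integrable_const _).add (hZi.const_mul _)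
  have e1 : ∫ ω, envelope T a s b n (T^[s] ω) ∂μ = ∫ ω, envelope T a s b n ω ∂μ :=
    (hT.iterate s).integral_comp_of_aestronglyMeasurable (hEi n).aestronglyMeasurable
  have hmono : ∫ ω, (envelope T a s b (n + s) ω + B.indicator (fun _ => ε * s) ω) ∂μ
      ≤ ∫ ω, (envelope T a s b n (T^[s] ω) + (A * s + s * max (a s ω / s - A) 0)) ∂μ := by
    refine integral_mono ((hEi _).add hBi)
      (hETi.add hci) fun ω => ?_
    have hz := le_max_right (a s ω / s - A) 0
    have hz' : a s ω ≤ A * s + s * max (a s ω / s - A) 0 := by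
      have : s * (a s ω / s - A) ≤ s * max (a s ω / s - A) 0 := by
        gcongr
        exact le_max_left _ _
      rw [mul_sub, mul_div_cancel₀ _ hs'.ne'] at this
      linarith
    have hpos : 0 ≤ s * max (a s ω / s - A) 0 := mul_nonneg hs'.le hz
    have henv := envelope_add (T := T) (a := a) (b := b) hs n ω
    by_cases hω : ω ∈ B
    · have hlt : a (n + s) ω < envelope T a s b (n + s) ω := hω
      have : envelope T a s b (n + s) ω = b + envelope T a s b n (T^[s] ω) := by
        rcases max_choice (a (n + s) ω) (b + envelope T a s b n (T^[s] ω)) with h | h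
        · rw [h] at henv
          exact absurd henv hlt.ne'
        · rw [henv, h]
      simp only [Set.indicator_of_mem hω, this]
      linarith
    · have hle : envelope T a s b (n + s) ω ≤ a (n + s) ω := not_lt.mp hω
      have h1 := ha.add_le s n ω
      have h2 := le_envelope (T := T) (a := a) (s := s) (b := b) n (T^[s] ω)
      rw [add_comm s n] at h1
      simp only [Set.indicator_of_notMem hω, add_zero]
      linarith
  rw [integral_add (hEi _) hBi, integral_add hETi hci,
    integral_add (integrable_const _) (hZi.const_mul _), e1,
    integral_indicator_const _ hBm] at hmono
  simp only [integral_const_mul, integral_const, probReal_univ, smul_eq_mul] at hmono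
  linarith

theorem sum_measureReal_lt_envelope_le [IsProbabilityMeasure μ]
    (ha : IsDisplacementCocycle μ T a) (hT : MeasurePreserving T μ μ) {A : ℝ}
    (hA : ∀ n : ℕ, A * n ≤ ∫ ω, a n ω ∂μ) {s : ℕ} (hs : 0 < s) (ε : ℝ) (N : ℕ) :
    ε * s * ∑ n ∈ Finset.range N,
        μ.real {ω | a (n + s) ω < envelope T a s ((A - ε) * s) (n + s) ω}
      ≤ N * (s * ∫ ω, max (a s ω / s - A) 0 ∂μ)
        + ∑ r ∈ Finset.range s, ((∫ ω, a r ω ∂μ) - A * r) := by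
  set b := (A - ε) * s with hb
  set e := ∫ ω, max (a s ω / s - A) 0 ∂μ
  have key : ∑ r ∈ Finset.range s, ∫ ω, envelope T a s b (N + r) ω ∂μ
      + ε * s * ∑ n ∈ Finset.range N, μ.real {ω | a (n + s) ω < envelope T a s b (n + s) ω}
      ≤ ∑ r ∈ Finset.range s, (∫ ω, a r ω ∂μ) + N * (A * s + s * e) := by
    induction N with
    | zero =>
      simp only [Finset.range_zero, Finset.sum_empty, mul_zero, add_zero, Nat.cast_zero, zero_mul,
        zero_add]
      refine (Finset.sum_congr rfl fun r hr => ?_).le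
      simp only [envelope_of_lt (Finset.mem_range.mp hr)]
    | succ N ih =>
      have h1 := Finset.sum_range_succ (fun r => ∫ ω, envelope T a s b (N + r) ω ∂μ) s
      have h2 := Finset.sum_range_succ' (fun r => ∫ ω, envelope T a s b (N + r) ω ∂μ) s
      have h3 : ∑ r ∈ Finset.range s, ∫ ω, envelope T a s b (N + 1 + r) ω ∂μ
          = ∑ r ∈ Finset.range s, ∫ ω, envelope T a s b (N + (r + 1)) ω ∂μ :=
        Finset.sum_congr rfl fun r _ => by rw [add_assoc, add_comm 1 r]
      have h4 := ha.integral_envelope_add_le hT hs A ε N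
      rw [Finset.sum_range_succ, h3]
      simp only [add_zero] at h2
      push_cast
      simp only [← hb] at h4
      linarith
  have hlow : ∑ r ∈ Finset.range s, A * ((N : ℝ) + r)
      ≤ ∑ r ∈ Finset.range s, ∫ ω, envelope T a s b (N + r) ω ∂μ := by
    refine Finset.sum_le_sum fun r _ => ?_
    have := hA (N + r)
    push_cast at this
    exact this.trans (integral_mono (ha.integrable _)
      (integrable_envelope hT ha.integrable hs _) fun ω => le_envelope _ ω)
  simp only [mul_add, Finset.sum_add_distrib, Finset.sum_const, Finset.card_range,
    nsmul_eq_mul] at hlow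
  rw [Finset.sum_sub_distrib]
  linarith

end IsDisplacementCocycle

section Avoid

variable {Ω : Type*} [MeasurableSpace Ω] {μ : Measure Ω}

theorem ae_exists_frequently_notMem [IsProbabilityMeasure μ] {B : ℕ → ℕ → Set Ω} {C : ℕ → ℝ}
    (hB : ∀ i N, ∑ n ∈ Finset.range N, μ.real (B i n) ≤ N * (1 / 2) ^ i + C i) :
    ∀ᵐ ω ∂μ, ∃ m, ∀ I, ∃ n ≥ I, ∀ i ∈ Finset.Ico m I, ω ∉ B i n := by
  set F : ℕ → ℕ → Set Ω := fun m I => {ω | ∀ n ≥ I, ∃ i ∈ Finset.Ico m I, ω ∈ B i n} with hF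
  have hreal (m I : ℕ) : μ.real (F m I) ≤ 2 * (1 / 2) ^ m := by
    set D := ∑ i ∈ Finset.Ico m I, C i
    have hN (N : ℕ) :
        ((N : ℝ) - I) * μ.real (F m I) ≤ N * (2 * (1 / 2) ^ m) + D := by
      have hgeom : ∑ i ∈ Finset.Ico m I, (1 / 2 : ℝ) ^ i ≤ 2 * (1 / 2) ^ m := by
        have := geom_sum_Ico_le_of_lt_one (x := (1 / 2 : ℝ)) (m := m) (n := I)
          (by norm_num) (by norm_num)
        refine this.trans_eq ?_
        ring
      calc ((N : ℝ) - I) * μ.real (F m I) ≤ ∑ n ∈ Finset.Ico I N, μ.real (F m I) := by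
            rw [Finset.sum_const, Nat.card_Ico, nsmul_eq_mul]
            gcongr
            rw [sub_le_iff_le_add]
            exact_mod_cast (show N ≤ N - I + I by omega)
        _ ≤ ∑ n ∈ Finset.Ico I N, ∑ i ∈ Finset.Ico m I, μ.real (B i n) := by
            refine Finset.sum_le_sum fun n hn => ?_
            refine le_trans (measureReal_mono ?_ (measure_ne_top _ _)) (measureReal_biUnion_finset_le _ _)
            intro ω hω
            obtain ⟨i, hi, hωi⟩ := hω n (Finset.mem_Ico.mp hn).1
            exact Set.mem_biUnion hi hωi
        _ ≤ ∑ n ∈ Finset.range N, ∑ i ∈ Finset.Ico m I, μ.real (B i n) := by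
            refine Finset.sum_le_sum_of_subset_of_nonneg (fun n hn => ?_)
              fun _ _ _ => Finset.sum_nonneg fun _ _ => measureReal_nonneg
            exact Finset.mem_range.mpr (Finset.mem_Ico.mp hn).2
        _ = ∑ i ∈ Finset.Ico m I, ∑ n ∈ Finset.range N, μ.real (B i n) := Finset.sum_comm
        _ ≤ ∑ i ∈ Finset.Ico m I, (N * (1 / 2) ^ i + C i) := Finset.sum_le_sum fun i _ => hB i N
        _ ≤ N * (2 * (1 / 2) ^ m) + D := by
            rw [Finset.sum_add_distrib, ← Finset.mul_sum]
            gcongr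
    by_contra! hlt
    obtain ⟨N, hNlt⟩ := exists_nat_gt ((D + I * μ.real (F m I)) /
      (μ.real (F m I) - 2 * (1 / 2) ^ m))
    rw [div_lt_iff₀ (by linarith)] at hNlt
    linarith [hN N]
  have hmeas (m : ℕ) : μ (⋃ I, F m I) ≤ ENNReal.ofReal (2 * (1 / 2) ^ m) := by
    have hmono : Monotone (F m) := fun I J hIJ ω hω n hn => by
      obtain ⟨i, hi, h⟩ := hω n (hIJ.trans hn)
      exact ⟨i, Finset.Ico_subset_Ico_right hIJ hi, h⟩
    rw [hmono.measure_iUnion]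
    refine iSup_le fun I => ?_
    rw [← ofReal_measureReal]
    exact ENNReal.ofReal_le_ofReal (hreal m I)
  have hlim : Tendsto (fun m : ℕ => ENNReal.ofReal (2 * (1 / 2) ^ m)) atTop (𝓝 0) := by
    rw [← ENNReal.ofReal_zero]
    refine ENNReal.tendsto_ofReal ?_
    simpa using (tendsto_pow_atTop_nhds_zero_of_lt_one (r := (1 / 2 : ℝ)) (by norm_num)
      (by norm_num)).const_mul 2
  rw [ae_iff]
  refine le_antisymm (ge_of_tendsto' hlim fun m => (measure_mono ?_).trans (hmeas m)) zero_le
  intro ω hω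
  simp only [Set.mem_ofPred_eq, not_exists, not_forall] at hω
  obtain ⟨I, hI⟩ := hω m
  refine Set.mem_iUnion.mpr ⟨I, fun n hn => ?_⟩
  by_contra! hcon
  exact hI n ⟨hn, hcon⟩

theorem exists_measurable_times {G : ℕ → ℕ → Set Ω} (hG : ∀ i n, MeasurableSet (G i n))
    (hae : ∀ᵐ ω ∂μ, ∃ m, ∀ I, ∃ n ≥ I, ∀ i ∈ Finset.Ico m I, ω ∈ G i n) :
    ∃ τ : ℕ → Ω → ℕ, (∀ I, Measurable (τ I)) ∧
      ∀ᵐ ω ∂μ, ∃ m, ∀ I, I ≤ τ I ω ∧ ∀ i ∈ Finset.Ico m I, ω ∈ G i (τ I ω) := by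
  classical
  set Q : ℕ → Set Ω := fun m => {ω | ∀ I, ∃ n ≥ I, ∀ i ∈ Finset.Ico m I, ω ∈ G i n} with hQ
  have hQm (m : ℕ) : MeasurableSet (Q m) := by
    have : Q m = ⋂ I, ⋃ n, ⋃ (_ : n ≥ I), ⋂ i ∈ Finset.Ico m I, G i n := by
      ext ω
      simp [hQ]
    rw [this]
    exact MeasurableSet.iInter fun I => MeasurableSet.iUnion fun n => MeasurableSet.iUnion fun _ =>
      Finset.measurableSet_biInter _ fun i _ => hG i n
  set R : Set Ω := ⋃ m, Q m
  have hRm : MeasurableSet R := MeasurableSet.iUnion hQm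
  have hex (ω : Ω) : ∃ m, ω ∈ Q m ∪ Rᶜ := by
    by_cases h : ω ∈ R
    · obtain ⟨m, hm⟩ := Set.mem_iUnion.mp h
      exact ⟨m, Or.inl hm⟩
    · exact ⟨0, Or.inr h⟩
  have hmm : Measurable fun ω => Nat.find (hex ω) :=
    measurable_find hex fun m => (hQm m).union hRm.compl
  set M : Ω → ℕ := fun ω => Nat.find (hex ω)
  have hM {ω : Ω} (h : ω ∈ R) : ω ∈ Q (M ω) :=
    (Nat.find_spec (hex ω)).resolve_right fun h' => h' h
  set P : ℕ → ℕ → Set Ω := fun I n => {ω | I ≤ n ∧ ∀ i, M ω ≤ i → i < I → ω ∈ G i n} with hP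
  have hPm (I n : ℕ) : MeasurableSet (P I n) := by
    have : P I n = {ω | I ≤ n} ∩ ⋂ i, ({ω | M ω ≤ i}ᶜ ∪ ({ω | i < I}ᶜ ∪ G i n)) := by
      ext ω
      simp only [hP, Set.mem_inter_iff, Set.mem_ofPred_eq, Set.mem_iInter, Set.mem_union,
        Set.mem_compl_iff, imp_iff_not_or]
    rw [this]
    exact (MeasurableSet.const _).inter (MeasurableSet.iInter fun i =>
      (measurableSet_le hmm measurable_const).compl.union
        ((MeasurableSet.const _).compl.union (hG i n)))
  have hex' (I : ℕ) (ω : Ω) : ∃ n, ω ∈ P I n ∪ Rᶜ := by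
    by_cases h : ω ∈ R
    · obtain ⟨n, hn, hn'⟩ := hM h I
      exact ⟨n, Or.inl ⟨hn, fun i h1 h2 => hn' i (Finset.mem_Ico.mpr ⟨h1, h2⟩)⟩⟩
    · exact ⟨0, Or.inr h⟩
  refine ⟨fun I ω => Nat.find (hex' I ω),
    fun I => measurable_find (hex' I) fun n => (hPm I n).union hRm.compl, ?_⟩
  filter_upwards [hae] with ω hω
  have hωR : ω ∈ R := Set.mem_iUnion.mpr hω
  refine ⟨M ω, fun I => ?_⟩
  have := (Nat.find_spec (hex' I ω)).resolve_right fun h' => h' hωR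
  exact ⟨this.1, fun i hi => this.2 i (Finset.mem_Ico.mp hi).1 (Finset.mem_Ico.mp hi).2⟩

end Avoid

section Selection

variable {Ω : Type*} [MeasurableSpace Ω]

theorem exists_measurable_infinite_subset {κ : ℕ → Ω → ℕ} (hκ : ∀ I, Measurable (κ I)) {M : ℕ}
    (hM : ∀ I ω, κ I ω < M) {S : Ω → Set ℕ} (hS : ∀ I, MeasurableSet {ω | I ∈ S ω})
    (hinf : ∀ ω, (S ω).Infinite) :
    ∃ S' : Ω → Set ℕ, ((∀ I, MeasurableSet {ω | I ∈ S' ω}) ∧ ∀ ω, (S' ω).Infinite) ∧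
      (∀ ω, S' ω ⊆ S ω) ∧ ∀ ω, ∀ I ∈ S' ω, ∀ J ∈ S' ω, κ I ω = κ J ω := by
  classical
  have hex (ω : Ω) : ∃ c, {I | I ∈ S ω ∧ κ I ω = c}.Infinite := by
    by_contra! hcon
    refine hinf ω (((Set.finite_Iio M).biUnion fun c _ => hcon c).subset ?_)
    intro I hI
    exact Set.mem_biUnion (Set.mem_Iio.mpr (hM I ω)) ⟨hI, rfl⟩
  have hc : Measurable fun ω => Nat.find (hex ω) := by
    refine measurable_find hex fun c => ?_
    have : {ω | {I | I ∈ S ω ∧ κ I ω = c}.Infinite}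
        = ⋂ n, ⋃ I, ⋃ (_ : n < I), {ω | I ∈ S ω} ∩ {ω | κ I ω = c} := by
      ext ω
      simp only [Set.mem_ofPred_eq, Set.mem_iInter, Set.mem_iUnion, Set.mem_inter_iff]
      refine ⟨fun h n => ?_, fun h => Set.infinite_of_forall_exists_gt fun n => ?_⟩
      · obtain ⟨I, hI, hn⟩ := h.exists_gt n
        exact ⟨I, hn, hI⟩
      · obtain ⟨I, hn, hI⟩ := h n
        exact ⟨I, hI, hn⟩
    rw [this]
    exact MeasurableSet.iInter fun n => MeasurableSet.iUnion fun I => MeasurableSet.iUnion fun _ =>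
      (hS I).inter (measurableSet_eq_fun (hκ I) measurable_const)
  refine ⟨fun ω => {I | I ∈ S ω ∧ κ I ω = Nat.find (hex ω)},
    ⟨fun I => (hS I).inter (measurableSet_eq_fun (hκ I) hc), fun ω => Nat.find_spec (hex ω)⟩,
    fun ω I hI => hI.1, fun ω I hI J hJ => hI.2.trans hJ.2.symm⟩

/-- Measurable diagonal extraction: along measurable times going to infinity, each of countably
many bounded integer-valued sequences becomes constant. -/
theorem exists_measurable_diagonal {κ : ℕ → ℕ → Ω → ℕ} (hκ : ∀ j I, Measurable (κ j I))
    (hb : ∀ j, ∃ M, ∀ I ω, κ j I ω < M) :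
    ∃ φ : ℕ → Ω → ℕ, (∀ j, Measurable (φ j)) ∧ (∀ j ω, j ≤ φ j ω) ∧
      ∀ ω j i i', j < i → j < i' → κ j (φ i ω) ω = κ j (φ i' ω) ω := by
  classical
  choose M hM using hb
  let 𝒮 := {S : Ω → Set ℕ // (∀ I, MeasurableSet {ω | I ∈ S ω}) ∧ ∀ ω, (S ω).Infinite}
  have step (j : ℕ) (S : 𝒮) : ∃ S' : 𝒮, (∀ ω, S'.1 ω ⊆ S.1 ω) ∧
      ∀ ω, ∀ I ∈ S'.1 ω, ∀ J ∈ S'.1 ω, κ j I ω = κ j J ω := by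
    obtain ⟨S', h1, h2⟩ :=
      exists_measurable_infinite_subset (hκ j) (hM j) S.2.1 S.2.2
    exact ⟨⟨S', h1⟩, h2⟩
  choose next hsub hconst using step
  let S : ℕ → 𝒮 := fun j => Nat.rec
    ⟨fun _ => Set.univ, fun _ => by simp, fun _ => Set.infinite_univ⟩ (fun j S => next j S) j
  have hanti (ω : Ω) : Antitone fun j => (S j).1 ω :=
    antitone_nat_of_succ_le fun j => hsub j (S j) ω
  have hex (j : ℕ) (ω : Ω) : ∃ n, j ≤ n ∧ n ∈ (S j).1 ω := by
    obtain ⟨n, hn, hjn⟩ := ((S j).2.2 ω).exists_gt j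
    exact ⟨n, hjn.le, hn⟩
  refine ⟨fun j ω => Nat.find (hex j ω), fun j => measurable_find (hex j) fun n =>
    (MeasurableSet.const _).inter ((S j).2.1 n), fun j ω => (Nat.find_spec (hex j ω)).1,
    fun ω j i i' hi hi' => ?_⟩
  exact hconst j (S j) ω _ (hanti ω hi (Nat.find_spec (hex i ω)).2)
    _ (hanti ω hi' (Nat.find_spec (hex i' ω)).2)

theorem Measurable.comp_countable_index {ι β : Type*} [Countable ι] [MeasurableSpace ι]
    [MeasurableSingletonClass ι] [MeasurableSpace β] {F : ι → Ω → β} (hF : ∀ i, Measurable (F i))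
    {N : Ω → ι} (hN : Measurable N) : Measurable fun ω => F (N ω) ω :=
  (measurable_from_prod_countable_right (f := fun p : ι × Ω => F p.1 p.2) hF).comp
    (hN.prodMk measurable_id)

/-- A measurable sequence of normalized `1`-Lipschitz functions on a separable space has a
measurable family of pointwise subsequential limits. -/
theorem exists_measurable_subseq_limit {X : Type*} [PseudoMetricSpace X]
    [TopologicalSpace.SeparableSpace X] (x₀ : X) {u : ℕ → Ω → X → ℝ}
    (hm : ∀ I y, Measurable fun ω => u I ω y) (hlip : ∀ I ω, LipschitzWith 1 (u I ω))
    (hb : ∀ I ω y, |u I ω y| ≤ dist y x₀) :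
    ∃ (φ : ℕ → Ω → ℕ) (h : Ω → X → ℝ), (∀ j ω, j ≤ φ j ω) ∧
      (∀ y, Measurable fun ω => h ω y) ∧
      ∀ ω y, Tendsto (fun j => u (φ j ω) ω y) atTop (𝓝 (h ω y)) := by
  have : Nonempty X := ⟨x₀⟩
  set q : ℕ → X := TopologicalSpace.denseSeq X
  set κ : ℕ → ℕ → Ω → ℕ := fun j I ω =>
    ⌊(u I ω (q j.unpair.1) + dist (q j.unpair.1) x₀) * ((j.unpair.2 : ℝ) + 1)⌋₊ with hκ
  obtain ⟨φ, hφm, hφ, hφc⟩ := exists_measurable_diagonal (κ := κ)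
    (fun j I => Nat.measurable_floor.comp (((hm I _).add_const _).mul_const _)) (fun j => by
      refine ⟨⌊2 * dist (q j.unpair.1) x₀ * ((j.unpair.2 : ℝ) + 1)⌋₊ + 1, fun I ω => ?_⟩
      refine Nat.lt_succ_of_le (Nat.floor_le_floor ?_)
      gcongr
      linarith [(abs_le.mp (hb I ω (q j.unpair.1))).2])
  have hcauchy (ω : Ω) (y : X) : CauchySeq fun j => u (φ j ω) ω y := by
    rw [Metric.cauchySeq_iff]
    intro ε hε
    obtain ⟨k, hk⟩ := (TopologicalSpace.denseRange_denseSeq X).exists_dist_lt y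
      (show (0 : ℝ) < ε / 3 by positivity)
    obtain ⟨r, hr⟩ := exists_nat_one_div_lt (show (0 : ℝ) < ε / 3 by positivity)
    refine ⟨Nat.pair k r + 1, fun i hi i' hi' => ?_⟩
    have hfl := hφc ω (Nat.pair k r) i i' hi hi'
    simp only [hκ, Nat.unpair_pair] at hfl
    set A := u (φ i ω) ω (q k)
    set A' := u (φ i' ω) ω (q k)
    have hr0 : (0 : ℝ) < r + 1 := by positivity
    have hA : 0 ≤ (A + dist (q k) x₀) * ((r : ℝ) + 1) :=
      mul_nonneg (by linarith [(abs_le.mp (hb (φ i ω) ω (q k))).1]) hr0.le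
    have hA' : 0 ≤ (A' + dist (q k) x₀) * ((r : ℝ) + 1) :=
      mul_nonneg (by linarith [(abs_le.mp (hb (φ i' ω) ω (q k))).1]) hr0.le
    have f1 := Nat.floor_le hA
    have f2 := Nat.lt_floor_add_one ((A + dist (q k) x₀) * ((r : ℝ) + 1))
    have f3 := Nat.floor_le hA'
    have f4 := Nat.lt_floor_add_one ((A' + dist (q k) x₀) * ((r : ℝ) + 1))
    rw [hfl] at f1 f2
    rw [div_lt_iff₀ hr0] at hr
    have hAA' : |A - A'| < ε / 3 := by
      rw [abs_lt]
      constructor <;> nlinarith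
    have l1 : dist (u (φ i ω) ω y) A ≤ dist y (q k) := by
      simpa using (hlip (φ i ω) ω).dist_le_mul y (q k)
    have l2 : dist (u (φ i' ω) ω y) A' ≤ dist y (q k) := by
      simpa using (hlip (φ i' ω) ω).dist_le_mul y (q k)
    calc dist (u (φ i ω) ω y) (u (φ i' ω) ω y)
        ≤ dist (u (φ i ω) ω y) A + dist A A' + dist A' (u (φ i' ω) ω y) := dist_triangle4 _ _ _ _
      _ < ε := by
        rw [dist_comm A', Real.dist_eq A]
        change dist y (q k) < _ at hk
        linarith
  choose h hh using fun ω y => cauchySeq_tendsto_of_complete (hcauchy ω y)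
  refine ⟨φ, h, hφ, fun y => ?_, hh⟩
  refine measurable_of_tendsto_metrizable
    (f := fun j ω => u (φ j ω) ω y)
    (fun j => Measurable.comp_countable_index (F := fun I ω => u I ω y) (fun I => hm I y) (hφm j)) ?_
  rw [tendsto_pi_nhds]
  exact fun ω => hh ω y

end Selection

theorem IsDisplacementCocycle.exists_measurable_good_times {Ω : Type*} [MeasurableSpace Ω]
    {μ : Measure Ω} [IsProbabilityMeasure μ] {T : Ω → Ω} {a : ℕ → Ω → ℝ}
    (ha : IsDisplacementCocycle μ T a) (hT : Ergodic T μ) {A : ℝ} (hA0 : 0 ≤ A)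
    (hA : ∀ n : ℕ, A * n ≤ ∫ ω, a n ω ∂μ)
    (hup : ∀ᵐ ω ∂μ, ∀ ε > 0, ∀ᶠ n : ℕ in atTop, a n ω / n ≤ A + ε) :
    ∃ (s : ℕ → ℕ) (τ : ℕ → Ω → ℕ), (∀ i, 0 < s i) ∧ (∀ I, Measurable (τ I)) ∧
      ∀ᵐ ω ∂μ, ∃ m, ∀ I, I ≤ τ I ω ∧ ∀ i ∈ Finset.Ico m I, ∀ n k, n + s i * k = τ I ω →
        (A - 1 / (i + 1)) * s i * k + a n (T^[s i * k] ω) ≤ a (τ I ω) ω := by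
  have hs (i : ℕ) : ∃ s : ℕ, 0 < s ∧
      ∫ ω, max (a s ω / s - A) 0 ∂μ ≤ 1 / ((i : ℝ) + 1) * (1 / 2) ^ i := by
    have := (ha.tendsto_integral_excess hT hA0 hup).eventually_le_const
      (show (0 : ℝ) < 1 / ((i : ℝ) + 1) * (1 / 2) ^ i by positivity)
    exact ((eventually_gt_atTop 0).and this).exists
  choose s hs0 hse using hs
  set E : ℕ → ℕ → Ω → ℝ := fun i => envelope T a (s i) ((A - 1 / ((i : ℝ) + 1)) * s i)
  set B : ℕ → ℕ → Set Ω := fun i n => {ω | a n ω < E i n ω}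
  have hBm (i n : ℕ) : MeasurableSet (B i n) := measurableSet_lt (ha.measurable n)
    (measurable_envelope hT.measurable ha.measurable (hs0 i) n)
  have hB : ∀ i N, ∑ n ∈ Finset.range N, μ.real (B i n) ≤ N * (1 / 2) ^ i
      + (∑ r ∈ Finset.range (s i), ((∫ ω, a r ω ∂μ) - A * r)) / (1 / ((i : ℝ) + 1) * s i) := by
    intro i N
    have hsi : (0 : ℝ) < s i := by exact_mod_cast hs0 i
    have hε : (0 : ℝ) < 1 / ((i : ℝ) + 1) := by positivity
    have h1 := ha.sum_measureReal_lt_envelope_le hT.toMeasurePreserving hA (hs0 i)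
      (1 / ((i : ℝ) + 1)) N
    have h0 : ∑ n ∈ Finset.range (s i), μ.real (B i n) = 0 := by
      refine Finset.sum_eq_zero fun n hn => ?_
      have : B i n = ∅ := by
        ext ω
        simp [B, E, envelope_of_lt (Finset.mem_range.mp hn)]
      rw [this, measureReal_empty]
    have h2 : ∑ n ∈ Finset.range N, μ.real (B i n)
        ≤ ∑ n ∈ Finset.range N, μ.real (B i (n + s i)) := by
      calc ∑ n ∈ Finset.range N, μ.real (B i n)
          ≤ ∑ n ∈ Finset.range (s i + N), μ.real (B i n) :=
            Finset.sum_le_sum_of_subset_of_nonneg (Finset.range_mono (by omega))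
              fun _ _ _ => measureReal_nonneg
        _ = ∑ n ∈ Finset.range N, μ.real (B i (n + s i)) := by
            rw [Finset.sum_range_add, h0, zero_add]
            simp_rw [add_comm (s i)]
    refine h2.trans ?_
    have h3 : (N : ℝ) * (s i * ∫ ω, max (a (s i) ω / s i - A) 0 ∂μ)
        ≤ N * (s i * (1 / ((i : ℝ) + 1) * (1 / 2) ^ i)) := by
      gcongr
      exact hse i
    rw [← sub_le_iff_le_add', le_div_iff₀ (by positivity)]
    simp only [B, E]
    linarith
  obtain ⟨τ, hτm, hτ⟩ := exists_measurable_times (μ := μ) (G := fun i n => (B i n)ᶜ)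
    (fun i n => (hBm i n).compl) (ae_exists_frequently_notMem hB)
  refine ⟨s, τ, hs0, hτm, ?_⟩
  filter_upwards [hτ] with ω ⟨m, hm⟩
  refine ⟨m, fun I => ⟨(hm I).1, fun i hi n k hnk => ?_⟩⟩
  have h1 : E i (τ I ω) ω ≤ a (τ I ω) ω := not_lt.mp ((hm I).2 i hi)
  rw [← hnk] at h1 ⊢
  exact (add_le_envelope (hs0 i) n k ω).trans h1

section Orbit

theorem measurable_orbitPt {Ω X : Type*} [MeasurableSpace Ω] [MeasurableSpace X] {T : Ω → Ω}
    {g : Ω → X → X} (hT : Measurable T)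
    (hmeas : Measurable fun p : Ω × X => g p.1 p.2) (x₀ : X) (n : ℕ) : Measurable (orbitPt T g x₀ n) := by
  induction n with
  | zero => exact measurable_const
  | succ n ih => exact hmeas.comp (measurable_id.prodMk (ih.comp hT))

variable {Ω X : Type*} [MetricSpace X] {T : Ω → Ω} {g : Ω → X → X}

theorem dist_orbitPt_add (hiso : ∀ ω, Isometry (g ω)) (x₀ : X) (n m : ℕ) (ω : Ω) :
    dist (orbitPt T g x₀ (n + m) ω) (orbitPt T g x₀ n ω)
      = dist (orbitPt T g x₀ m (T^[n] ω)) x₀ := by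
  induction n generalizing ω with
  | zero => simp [orbitPt]
  | succ n ih =>
    rw [add_right_comm, orbitPt, orbitPt, (hiso ω).dist_eq, ih, Function.iterate_succ_apply]

theorem isDisplacementCocycle_orbitPt [MeasurableSpace Ω] [MeasurableSpace X]
    [SecondCountableTopology X] [OpensMeasurableSpace X] {μ : Measure Ω}
    (hT : MeasurePreserving T μ μ) (hiso : ∀ ω, Isometry (g ω))
    (hmeas : Measurable fun p : Ω × X => g p.1 p.2) (x₀ : X)
    (hint : Integrable (fun ω => dist (g ω x₀) x₀) μ) :
    IsDisplacementCocycle μ T fun n ω => dist (orbitPt T g x₀ n ω) x₀ := by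
  have hm (n : ℕ) : Measurable fun ω => dist (orbitPt T g x₀ n ω) x₀ :=
    (measurable_orbitPt hT.measurable hmeas x₀ n).dist measurable_const
  have hadd (n m : ℕ) (ω : Ω) : dist (orbitPt T g x₀ (n + m) ω) x₀
      ≤ dist (orbitPt T g x₀ n ω) x₀ + dist (orbitPt T g x₀ m (T^[n] ω)) x₀ := by
    rw [← dist_orbitPt_add hiso]
    linarith [dist_triangle (orbitPt T g x₀ (n + m) ω) (orbitPt T g x₀ n ω) x₀]
  refine ⟨hm, fun n => ?_, fun ω => by simp [orbitPt], fun n ω => dist_nonneg, hadd,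
    fun n m ω => ?_⟩
  · induction n with
    | zero => simp [orbitPt]
    | succ n ih =>
      have h1 : Integrable (fun ω => dist (orbitPt T g x₀ n (T ω)) x₀) μ :=
        hT.integrable_comp_of_integrable ih
      refine (hint.add h1).mono' (hm _).aestronglyMeasurable (Eventually.of_forall fun ω => ?_)
      have := hadd 1 n ω
      rw [add_comm 1 n] at this
      simpa [abs_of_nonneg, orbitPt] using this
  · rw [← dist_orbitPt_add hiso]
    linarith [dist_triangle_left (orbitPt T g x₀ n ω) x₀ (orbitPt T g x₀ (n + m) ω)]

end Orbit

/-- A sequence growing at rate at least `A - 1 / (i + 1)` along the multiples of `s i`, with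
sublinear oscillation, has lower growth rate at least `A`. -/
theorem eventually_le_div_of_le_multiples {H : ℕ → ℝ} {A : ℝ} (hA : 0 ≤ A) {s : ℕ → ℕ}
    (hs : ∀ i, 0 < s i) {m : ℕ}
    (hH : ∀ i ≥ m, ∀ k : ℕ, (A - 1 / (i + 1)) * s i * k ≤ H (s i * k))
    {w : ℕ → ℕ → ℝ} (hw : ∀ i, Tendsto (fun n : ℕ => w i n / n) atTop (𝓝 0))
    (hosc : ∀ i n r, r ≤ s i → H (n + r) - H n ≤ w i n) {ε : ℝ} (hε : 0 < ε) :
    ∀ᶠ n : ℕ in atTop, A - ε ≤ H n / n := by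
  obtain ⟨i₀, hi₀⟩ := exists_nat_one_div_lt (show (0 : ℝ) < ε / 3 by positivity)
  set i := max i₀ m
  have hi : 1 / ((i : ℝ) + 1) < ε / 3 :=
    (one_div_le_one_div_of_le (by positivity) (by simp [i])).trans_lt hi₀
  have hi0 : 0 < 1 / ((i : ℝ) + 1) := by positivity
  filter_upwards [eventually_gt_atTop 0,
    (hw i).eventually_lt_const (show (0 : ℝ) < ε / 3 by positivity),
    (tendsto_const_div_atTop_nhds_zero_nat (ε / 3 * s i)).eventually_lt_const
      (show (0 : ℝ) < ε / 3 by positivity)] with n hn h1 h2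
  have hn' : (0 : ℝ) < n := by exact_mod_cast hn
  have hmod := Nat.mod_lt n (hs i)
  have hdiv := Nat.div_add_mod n (s i)
  set k := n / s i + 1 with hk
  have hkn : s i * k = n + (s i - n % s i) := by
    rw [hk, mul_add, mul_one]
    omega
  have h3 := hH i (le_max_right _ _) k
  have h4 := hosc i n (s i - n % s i) (Nat.sub_le _ _)
  rw [← hkn] at h4
  have h5 : (n : ℝ) ≤ s i * k := by exact_mod_cast (show n ≤ s i * k by omega)
  have h6 : (s i : ℝ) * k ≤ n + s i := by exact_mod_cast (show s i * k ≤ n + s i by omega)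
  rw [div_lt_iff₀ hn'] at h1 h2
  rw [le_div_iff₀ hn']
  have h7 : A * n ≤ A * (s i * k) := by gcongr
  have h8 : 1 / ((i : ℝ) + 1) * (s i * k) ≤ ε / 3 * (n + s i) := by gcongr
  linarith

/-- **Karlsson–Ledrappier noncommutative ergodic theorem.** -/
theorem noncommutative_ergodic_theorem
    {Ω : Type*} [MeasurableSpace Ω] {μ : Measure Ω} [IsProbabilityMeasure μ]
    {T : Ω → Ω} (hT : Ergodic T μ)
    {X : Type*} [MetricSpace X] [ProperSpace X]
    [MeasurableSpace X] [BorelSpace X] (x₀ : X)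
    (g : Ω → X → X)
    (hiso : ∀ ω, Isometry (g ω) ∧ Function.Surjective (g ω))
    (hmeas : Measurable fun p : Ω × X => g p.1 p.2)
    (hint : Integrable (fun ω => dist (g ω x₀) x₀) μ)
    (l : ℝ)
    (hl : l = ⨅ N : {n : ℕ // 0 < n},
      (∫ ω, dist (orbitPt T g x₀ (N : ℕ) ω) x₀ ∂μ) / ((N : ℕ) : ℝ)) :
    (∀ᵐ ω ∂μ,
      Tendsto (fun N : ℕ => dist (orbitPt T g x₀ N ω) x₀ / (N : ℝ)) atTop (𝓝 l)) ∧
    ∃ h : Ω → X → ℝ,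
      (∀ y : X, Measurable fun ω => h ω y) ∧
      (∀ᵐ ω ∂μ,
        h ω ∈ closure {f : X → ℝ | ∃ x : X, f = fun y => dist x y - dist x x₀}) ∧
      (∀ᵐ ω ∂μ,
        Tendsto (fun N : ℕ => -h ω (orbitPt T g x₀ N ω) / (N : ℝ)) atTop (𝓝 l)) ∧
      (0 < l → ∀ᵐ ω ∂μ,
        h ω ∉ {f : X → ℝ | ∃ x : X, f = fun y => dist x y - dist x x₀}) := by
  have hisom : ∀ ω, Isometry (g ω) := fun ω => (hiso ω).1
  set a : ℕ → Ω → ℝ := fun n ω => dist (orbitPt T g x₀ n ω) x₀ with ha_def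
  have ha : IsDisplacementCocycle μ T a :=
    isDisplacementCocycle_orbitPt hT.toMeasurePreserving hisom hmeas x₀ hint
  have hnonneg (N : {n : ℕ // 0 < n}) : 0 ≤ (∫ ω, a N ω ∂μ) / ((N : ℕ) : ℝ) :=
    div_nonneg (integral_nonneg (ha.nonneg _)) (Nat.cast_nonneg _)
  have hl0 : 0 ≤ l := hl ▸ Real.iInf_nonneg hnonneg
  have hlow (n : ℕ) : l * n ≤ ∫ ω, a n ω ∂μ := by
    rcases Nat.eq_zero_or_pos n with rfl | hn
    · simpa using integral_nonneg (ha.nonneg 0)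
    · rw [← le_div_iff₀ (by exact_mod_cast hn), hl]
      exact ciInf_le ⟨0, by rintro _ ⟨N, rfl⟩; exact hnonneg N⟩ (⟨n, hn⟩ : {n : ℕ // 0 < n})
  have hup : ∀ᵐ ω ∂μ, ∀ ε > 0, ∀ᶠ n : ℕ in atTop, a n ω / n ≤ l + ε := by
    have := ae_all_iff.mpr fun N : {n : ℕ // 0 < n} => ha.ae_eventually_div_le hT N.2
    filter_upwards [this] with ω hω ε hε
    have : Nonempty {n : ℕ // 0 < n} := ⟨⟨1, one_pos⟩⟩
    obtain ⟨N, hN⟩ := exists_lt_of_ciInf_lt (hl ▸ lt_add_of_pos_right l (half_pos hε))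
    filter_upwards [hω N (ε / 2) (half_pos hε)] with n hn
    linarith
  obtain ⟨s, τ, hs, hτm, hτ⟩ := ha.exists_measurable_good_times hT hl0 hlow hup
  set v : ℕ → Ω → X → ℝ := fun n ω y =>
    dist (orbitPt T g x₀ n ω) y - dist (orbitPt T g x₀ n ω) x₀ with hv
  have hvm (n : ℕ) (y : X) : Measurable fun ω => v n ω y := by
    have := measurable_orbitPt hT.measurable hmeas x₀ n
    exact (this.dist measurable_const).sub (this.dist measurable_const)
  have hdist (x y z : X) : |dist x y - dist x z| ≤ dist y z := by
    rw [dist_comm x y, dist_comm x z]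
    exact abs_dist_sub_le y z x
  have hlip (n : ℕ) (ω : Ω) : LipschitzWith 1 (v n ω) :=
    LipschitzWith.of_dist_le_mul fun y z => by
      rw [Real.dist_eq, hv, sub_sub_sub_cancel_right, NNReal.coe_one, one_mul]
      exact hdist _ y z
  obtain ⟨φ, h, hφ, hhm, hh⟩ := exists_measurable_subseq_limit x₀ (u := fun I ω => v (τ I ω) ω)
    (fun I y => Measurable.comp_countable_index (F := fun n ω => v n ω y) (fun n => hvm n y)
      (hτm I))
    (fun I ω => hlip _ ω) (fun I ω y => hdist _ y x₀)
  have hhlip (ω : Ω) (y z : X) : h ω y - h ω z ≤ dist y z :=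
    le_of_tendsto' ((hh ω y).sub (hh ω z)) fun j => by
      have := (hlip (τ (φ j ω) ω) ω).dist_le_mul y z
      rw [Real.dist_eq, NNReal.coe_one, one_mul] at this
      exact (le_abs_self _).trans this
  have hh0 (ω : Ω) : h ω x₀ = 0 :=
    tendsto_nhds_unique (hh ω x₀) (by simp [hv])
  have hle (n : ℕ) (ω : Ω) : -h ω (orbitPt T g x₀ n ω) ≤ a n ω := by
    have := hhlip ω x₀ (orbitPt T g x₀ n ω)
    rw [hh0, zero_sub, dist_comm] at this
    exact this
  have hosc_ae : ∀ᵐ ω ∂μ, ∀ i, Tendsto (fun n : ℕ =>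
      (∑ r ∈ Finset.range (s i + 1), a r (T^[n] ω)) / n) atTop (𝓝 0) :=
    ae_all_iff.mpr fun i => hT.ae_tendsto_comp_iterate_div
      (f := fun ω => ∑ r ∈ Finset.range (s i + 1), a r ω)
      (Finset.measurable_fun_sum _ fun r _ => ha.measurable r)
      (integrable_finsetSum _ fun r _ => ha.integrable r)
  have hlower : ∀ᵐ ω ∂μ, ∀ ε > 0, ∀ᶠ n : ℕ in atTop,
      l - ε ≤ -h ω (orbitPt T g x₀ n ω) / n := by
    filter_upwards [hτ, hosc_ae] with ω ⟨m, hm⟩ hosc ε hε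
    refine eventually_le_div_of_le_multiples (H := fun n => -h ω (orbitPt T g x₀ n ω))
      hl0 hs (m := m) (fun i hi k => ?_) hosc (fun i n r hr => ?_) hε
    · rw [le_neg]
      refine le_of_tendsto (hh ω (orbitPt T g x₀ (s i * k) ω)) ?_
      filter_upwards [eventually_ge_atTop (max (i + 1) (s i * k))] with j hj
      have hj' := hj.trans (hφ j ω)
      have h1 := (hm (φ j ω)).1
      obtain ⟨n, hn⟩ := Nat.exists_eq_add_of_le' (((le_max_right _ _).trans hj').trans h1)
      have h2 := (hm (φ j ω)).2 i
        (Finset.mem_Ico.mpr ⟨hi, Nat.lt_of_succ_le ((le_max_left _ _).trans hj')⟩) n k hn.symm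
      have h3 := dist_orbitPt_add (T := T) hisom x₀ (s i * k) n ω
      rw [add_comm, ← hn] at h3
      simp only [hv, h3]
      simp only [ha_def] at h2
      linarith
    · have h1 := hhlip ω (orbitPt T g x₀ n ω) (orbitPt T g x₀ (n + r) ω)
      rw [dist_comm, dist_orbitPt_add hisom] at h1
      have h2 : a r (T^[n] ω) ≤ ∑ r ∈ Finset.range (s i + 1), a r (T^[n] ω) :=
        Finset.single_le_sum (f := fun r => a r (T^[n] ω)) (fun r _ => ha.nonneg r _)
          (Finset.mem_range.mpr (Nat.lt_succ_of_le hr))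
      simp only [ha_def] at h2 ⊢
      linarith
  have hdiv (n : ℕ) (ω : Ω) : -h ω (orbitPt T g x₀ n ω) / n ≤ a n ω / n := by
    gcongr
    exact hle n ω
  have hlim : ∀ᵐ ω ∂μ,
      Tendsto (fun N : ℕ => -h ω (orbitPt T g x₀ N ω) / (N : ℝ)) atTop (𝓝 l) := by
    filter_upwards [hup, hlower] with ω h1 h2
    rw [Metric.tendsto_nhds]
    intro ε hε
    filter_upwards [h1 (ε / 2) (half_pos hε), h2 (ε / 2) (half_pos hε)] with n hn1 hn2
    rw [Real.dist_eq, abs_lt]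
    constructor <;> linarith [hdiv n ω]
  refine ⟨?_, h, hhm, Eventually.of_forall fun ω => ?_, hlim, fun hlpos => ?_⟩
  · filter_upwards [hup, hlower] with ω h1 h2
    rw [Metric.tendsto_nhds]
    intro ε hε
    filter_upwards [h1 (ε / 2) (half_pos hε), h2 (ε / 2) (half_pos hε)] with n hn1 hn2
    rw [Real.dist_eq, abs_lt]
    constructor <;> linarith [hdiv n ω]
  · exact mem_closure_of_tendsto (tendsto_pi_nhds.mpr (hh ω))
      (Eventually.of_forall fun j => ⟨_, rfl⟩)
  · filter_upwards [hlim] with ω hω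
    rintro ⟨x, hx⟩
    refine absurd (le_of_tendsto_of_tendsto' hω
      (tendsto_const_div_atTop_nhds_zero_nat (dist x x₀)) fun n => ?_) (not_le.mpr hlpos)
    gcongr
    rw [hx]
    linarith [dist_nonneg (x := x) (y := orbitPt T g x₀ n ω)]
end

section
/- Let X be a compact metric space, T : X → X a continuous map, and f : X → ℝ a continuous function. Define f_n(x) := f(x) + f(Tx) + ⋯ + f(T^{n−1}x) and a_n := sup_{x ∈ X} f_n(x). Then a_{n+m} ≤ a_n + a_m for all n, m ≥ 1, hence l := lim_{N→∞} a_N / N exists; and there exists a T-invariant Borel probability measure μ on X such that ∫_X f dμ ≥ l. -/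
open MeasureTheory Filter Topology

open scoped BoundedContinuousFunction

/-- The suprema of the Birkhoff sums of a function bounded above form a subadditive sequence. -/
theorem subadditive_iSup_birkhoffSum {X : Type*} [Nonempty X] {T : X → X} {f : X → ℝ}
    (hb : ∀ n, BddAbove (Set.range (birkhoffSum T f n))) :
    Subadditive fun n => ⨆ x, birkhoffSum T f n x := by
  intro n m
  refine ciSup_le fun x => ?_
  rw [birkhoffSum_add]
  exact add_le_add (le_ciSup (hb n) x) (le_ciSup (hb m) (T^[n] x))

theorem Continuous.birkhoffSum {X M : Type*} [TopologicalSpace X] [TopologicalSpace M]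
    [AddCommMonoid M] [ContinuousAdd M] {T : X → X} {f : X → M} (hT : Continuous T)
    (hf : Continuous f) (n : ℕ) : Continuous (birkhoffSum T f n) :=
  continuous_finsetSum _ fun i _ => hf.comp (hT.iterate i)

/-- The uniform probability measure on the orbit segment `x, T x, …, T^n x`. -/
noncomputable def orbitMeasure {X : Type*} [MeasurableSpace X] (T : X → X) (n : ℕ) (x : X) :
    Measure X :=
  ((n + 1 : ℕ) : ENNReal)⁻¹ • ∑ i ∈ Finset.range (n + 1), Measure.dirac (T^[i] x)

instance {X : Type*} [MeasurableSpace X] (T : X → X) (n : ℕ) (x : X) :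
    IsProbabilityMeasure (orbitMeasure T n x) where
  measure_univ := by
    simp only [orbitMeasure, Measure.smul_apply, Measure.finsetSum_apply, measure_univ,
      Finset.sum_const, Finset.card_range, nsmul_eq_mul, mul_one, smul_eq_mul]
    exact ENNReal.inv_mul_cancel (by simp) (ENNReal.natCast_ne_top _)

theorem integral_orbitMeasure {X : Type*} [TopologicalSpace X] [MeasurableSpace X] [BorelSpace X]
    (T : X → X) (n : ℕ) (x : X) (g : X →ᵇ ℝ) :
    ∫ y, g y ∂orbitMeasure T n x = birkhoffAverage ℝ T g (n + 1) x := by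
  rw [orbitMeasure, integral_smul_measure, integral_finsetSum_measure fun i _ => g.integrable _,
    birkhoffAverage, birkhoffSum, ENNReal.toReal_inv, ENNReal.toReal_natCast]
  congr 1
  exact Finset.sum_congr rfl fun i _ =>
    integral_dirac' _ _ g.continuous.stronglyMeasurable

/-- **Krylov–Bogolyubov**: a limit of Birkhoff averages along moving base points is the integral
against some invariant probability measure. -/
theorem exists_measurePreserving_integral_eq_of_tendsto_birkhoffAverage
    {X : Type*} [MetricSpace X] [CompactSpace X] [MeasurableSpace X] [BorelSpace X]
    {T : X → X} (hT : Continuous T) {f : X → ℝ} (hf : Continuous f) {x : ℕ → X} {l : ℝ}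
    (hl : Tendsto (fun n => birkhoffAverage ℝ T f (n + 1) (x n)) atTop (𝓝 l)) :
    ∃ μ : Measure X, IsProbabilityMeasure μ ∧ MeasurePreserving T μ μ ∧ ∫ y, f y ∂μ = l := by
  let ν : ℕ → ProbabilityMeasure X := fun n => ⟨orbitMeasure T n (x n), inferInstance⟩
  obtain ⟨μ, -, hμ⟩ := isCompact_univ.ultrafilter_le_nhds ((hyperfilter ℕ).map ν) (by simp)
  have hlim (g : X →ᵇ ℝ) : Tendsto (fun n => birkhoffAverage ℝ T g (n + 1) (x n))
      (hyperfilter ℕ) (𝓝 (∫ y, g y ∂(μ : Measure X))) := by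
    simpa only [ν, ProbabilityMeasure.coe_mk, integral_orbitMeasure] using
      (ProbabilityMeasure.tendsto_iff_forall_integral_tendsto.mp
        (show Tendsto ν (hyperfilter ℕ) (𝓝 μ) from hμ)) g
  have hatTop : (hyperfilter ℕ : Filter ℕ) ≤ atTop := Nat.hyperfilter_le_atTop
  refine ⟨μ, inferInstance, ⟨hT.measurable, ?_⟩, ?_⟩
  · have := Measure.isProbabilityMeasure_map (μ := (μ : Measure X)) hT.aemeasurable
    refine ext_of_forall_integral_eq_of_IsFiniteMeasure fun g => ?_
    rw [integral_map hT.aemeasurable g.continuous.aestronglyMeasurable]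
    refine tendsto_nhds_unique (hlim (g.compContinuous ⟨T, hT⟩)) ?_
    have hzero : Tendsto (fun n => birkhoffAverage ℝ T g (n + 1) (T (x n))
        - birkhoffAverage ℝ T g (n + 1) (x n)) (hyperfilter ℕ) (𝓝 0) := by
      refine Tendsto.mono_left ?_ hatTop
      refine squeeze_zero_norm (a := fun n : ℕ => 2 * ‖g‖ / ((n : ℝ) + 1)) (fun n => ?_) ?_
      · rw [birkhoffAverage_apply_sub_birkhoffAverage, norm_smul, norm_inv,
          Real.norm_natCast, inv_mul_eq_div, Nat.cast_succ]
        gcongr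
        exact dist_eq_norm (g _) (g _) ▸ g.dist_le_two_norm _ _
      · exact tendsto_const_nhds.div_atTop
          (tendsto_atTop_add_const_right _ _ tendsto_natCast_atTop_atTop)
    refine ((hlim g).add hzero).congr' (Eventually.of_forall fun n => ?_) |>.trans (by simp)
    simp only [add_sub_cancel, birkhoffAverage, birkhoffSum,
      BoundedContinuousFunction.compContinuous_apply, ContinuousMap.coe_mk,
      ← Function.iterate_succ_apply, ← Function.iterate_succ_apply']
  · exact tendsto_nhds_unique (hlim (BoundedContinuousFunction.mkOfCompact ⟨f, hf⟩))
      (hl.mono_left hatTop)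

/-- **Existence of a maximizing invariant measure for Birkhoff suprema.**
With `f_n(x) = f(x) + f(Tx) + ⋯ + f(T^{n−1}x)` and `a_n = sup_x f_n(x)`, the sequence
`(a_n)` is subadditive, `a_N/N → l`, and some `T`-invariant Borel probability measure `μ`
satisfies `∫ f dμ ≥ l`. -/
theorem exists_maximizing_invariant_measure
    {X : Type*} [MetricSpace X] [CompactSpace X] [Nonempty X]
    [MeasurableSpace X] [BorelSpace X]
    (T : X → X) (hT : Continuous T) (f : X → ℝ) (hf : Continuous f) :
    (∀ n m : ℕ, 1 ≤ n → 1 ≤ m →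
      (⨆ x : X, ∑ i ∈ Finset.range (n + m), f (T^[i] x))
        ≤ (⨆ x : X, ∑ i ∈ Finset.range n, f (T^[i] x))
          + (⨆ x : X, ∑ i ∈ Finset.range m, f (T^[i] x))) ∧
    ∃ l : ℝ,
      Tendsto (fun N : ℕ => (⨆ x : X, ∑ i ∈ Finset.range N, f (T^[i] x)) / (N : ℝ))
        atTop (𝓝 l) ∧
      ∃ μ : Measure X, IsProbabilityMeasure μ ∧ MeasurePreserving T μ μ ∧
        l ≤ ∫ x, f x ∂μ := by
  have hcont := Continuous.birkhoffSum hT hf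
  have hbdd (n : ℕ) : BddAbove (Set.range (birkhoffSum T f n)) :=
    (isCompact_range (hcont n)).bddAbove
  have hsub := subadditive_iSup_birkhoffSum hbdd
  have hmax (n : ℕ) : ∃ x, ⨆ y, birkhoffSum T f n y = birkhoffSum T f n x := by
    obtain ⟨x, hx⟩ := (isCompact_range (hcont n)).sSup_mem (Set.range_nonempty _)
    exact ⟨x, hx.symm⟩
  choose x hx using hmax
  have hbelow : BddBelow (Set.range fun n : ℕ => (⨆ y, birkhoffSum T f n y) / n) := by
    obtain ⟨c, hc⟩ := (isCompact_range hf).bddBelow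
    refine ⟨min c 0, ?_⟩
    rintro _ ⟨n, rfl⟩
    rcases n.eq_zero_or_pos with rfl | hn
    · simp
    · refine (min_le_left c 0).trans ((le_div_iff₀ (by exact_mod_cast hn)).2 ?_)
      rw [hx, mul_comm]
      simpa [birkhoffSum] using Finset.card_nsmul_le_sum (Finset.range n)
        (fun i => f (T^[i] (x n))) c fun i _ => hc ⟨_, rfl⟩
  have hlim := hsub.tendsto_lim hbelow
  refine ⟨fun n m _ _ => hsub n m, hsub.lim, hlim, ?_⟩
  obtain ⟨μ, hμ, hinv, hμf⟩ := exists_measurePreserving_integral_eq_of_tendsto_birkhoffAverage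
    hT hf (x := fun n => x (n + 1)) (l := hsub.lim) <| by
      refine (hlim.comp (tendsto_add_atTop_nat 1)).congr fun n => ?_
      rw [Function.comp_apply, hx, birkhoffAverage, smul_eq_mul, inv_mul_eq_div]
  exact ⟨μ, hμ, hinv, hμf.ge⟩
end
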